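/- In the associated graded algebra gr^F Z(ℂ[S_n]) of the center of the group algebra of S_n (filtered by deg(σ) = 2(n − number of cycles of σ)), the cup product of the class sum of (k+1)-cycles with the class sum of cycle type λ = (1^{α₁} 2^{α₂}...) is: χ_{(k+1,1^{n−k−1})} ∪ χ_λ = Σ_ν [ k! · |ν| · (α_{|ν|}+1) / ∏ᵢ γᵢ! ] · χ_{λ_ν}, where ν = (1^{γ₁} 2^{γ₂}...) runs over partitions with ℓ(ν) = k+1 and γᵢ ≤ αᵢ for all i, and λ_ν is obtained from λ by removing γᵢ parts equal to i for each i and adding one part equal to |ν|. -/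

import Mathlib

noncomputable def fullCycleType {n : ℕ} (σ : Equiv.Perm (Fin n)) : Multiset ℕ :=
  σ.cycleType + Multiset.replicate (n - σ.support.card) 1

noncomputable def numCycles {n : ℕ} (σ : Equiv.Perm (Fin n)) : ℕ :=
  σ.cycleType.card + (n - σ.support.card)

open scoped Classical in
/-- The class sum `χ_λ = Σ_{σ ∈ C_λ} σ` in the group algebra `ℂ[S_n]`. -/
noncomputable def chiClass (n : ℕ) (lam : Multiset ℕ) :
    MonoidAlgebra ℂ (Equiv.Perm (Fin n)) :=
  ∑ σ ∈ Finset.univ.filter (fun σ : Equiv.Perm (Fin n) => fullCycleType σ = lam),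
    MonoidAlgebra.single σ 1

/-- The span of group elements of (half-)degree `n - c(σ)` strictly less than `d`:
the part of the filtration below degree `2d`. -/
noncomputable def lowFilt (n d : ℕ) : Submodule ℂ (MonoidAlgebra ℂ (Equiv.Perm (Fin n))) :=
  Submodule.span ℂ {x | ∃ σ : Equiv.Perm (Fin n),
    n - numCycles σ < d ∧ x = MonoidAlgebra.single σ 1}

/-!
Multiply a permutation `σ` of cycle type `lam` by a `(k + 1)`-cycle `τ`. The orbit partition of
`τ * σ` refines the one obtained from `σ` by merging all the orbits that `τ` meets, and equals it
when `τ` meets each of them in a single point. In that case `k + 1` cycles of `σ`, of lengths `ν`,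
become one cycle of length `ν.sum`; otherwise `τ * σ` has more cycles and is of lower degree.

For fixed `σ` and `ν` the number of such `τ` is `k! * ν.prod * ∏ i, (αᵢ choose γᵢ)`: choose the
cycles to merge, one point on each of them, and a cyclic order of these points. The coefficient of
a class sum is the number of pairs `(τ, σ)` divided by the size of the class, and the class sizes
are `n! / ∏ i, i ^ αᵢ * αᵢ!`.
-/

section

open Finset Equiv Equiv.Perm
open scoped Nat

section FiberCounting

variable {α ι : Type*} [DecidableEq ι]

lemma card_filter_card_fiber_eq (A : Finset α) (f : α → ι) (c : ι → ℕ)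
    {R : Finset ι} (hR : ∀ x ∈ A, f x ∈ R) :
    #{S ∈ A.powerset | ∀ i ∈ R, #{x ∈ S | f x = i} = c i} =
      ∏ i ∈ R, (#{x ∈ A | f x = i}).choose (c i) := by
  classical
  simp_rw [← card_powersetCard, ← card_pi]
  refine card_bij (fun S _ i _ ↦ {x ∈ S | f x = i}) ?_ ?_ ?_
  · intro S hS
    simp only [mem_filter, mem_powerset] at hS
    exact mem_pi.2 fun i hi ↦
      mem_powersetCard.2 ⟨filter_subset_filter _ hS.1, hS.2 i hi⟩
  · intro S hS S' hS' h
    simp only [mem_filter, mem_powerset] at hS hS'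
    have hmem : ∀ x ∈ A, x ∈ S ↔ x ∈ S' := by
      intro x hx
      simpa using Finset.ext_iff.1 (congr_fun₂ h (f x) (hR x hx)) x
    ext x
    exact ⟨fun hx ↦ (hmem x (hS.1 hx)).1 hx, fun hx ↦ (hmem x (hS'.1 hx)).2 hx⟩
  · intro g hg
    have hg' := fun i hi ↦ mem_powersetCard.1 (mem_pi.1 hg i hi)
    have hfib : ∀ i (hi : i ∈ R),
        {x ∈ {x ∈ A | ∃ h : f x ∈ R, x ∈ g (f x) h} | f x = i} = g i hi := by
      intro i hi
      ext x
      simp only [mem_filter]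
      constructor
      · rintro ⟨⟨-, _, hx⟩, rfl⟩
        exact hx
      · intro hx
        obtain ⟨hxA, rfl⟩ := mem_filter.1 ((hg' i hi).1 hx)
        exact ⟨⟨hxA, hi, hx⟩, rfl⟩
    refine ⟨{x ∈ A | ∃ h : f x ∈ R, x ∈ g (f x) h}, ?_, ?_⟩
    · simp only [mem_filter, mem_powerset, filter_subset, true_and]
      exact fun i hi ↦ hfib i hi ▸ (hg' i hi).2
    · funext i hi
      exact hfib i hi

lemma card_filter_val_map_eq (A : Finset α) (f : α → ι) {ν : Multiset ι} (hν : ν ≤ A.val.map f) :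
    #{T ∈ A.powerset | T.val.map f = ν} =
      ∏ i ∈ (A.val.map f).toFinset, ((A.val.map f).count i).choose (ν.count i) := by
  classical
  have count_eq (T : Finset α) (i : ι) : (T.val.map f).count i = #{x ∈ T | f x = i} := by
    simp only [Multiset.count_map, eq_comm (a := i)]
    rfl
  have hmem : ∀ x ∈ A, f x ∈ (A.val.map f).toFinset := by
    intro x hx
    exact Multiset.mem_toFinset.2 (Multiset.mem_map_of_mem f hx)
  simp_rw [count_eq A]
  rw [← card_filter_card_fiber_eq A f ν.count hmem]
  refine congrArg card (filter_congr fun T hT ↦ ?_)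
  have hTA : T.val.map f ≤ A.val.map f :=
    Multiset.map_le_map (val_le_iff.2 (mem_powerset.1 hT))
  simp_rw [← count_eq T]
  refine ⟨fun h i _ ↦ by rw [h], fun h ↦ Multiset.ext.2 fun i ↦ ?_⟩
  by_cases hi : i ∈ (A.val.map f).toFinset
  · exact h i hi
  · rw [Multiset.mem_toFinset] at hi
    rw [Multiset.count_eq_zero_of_notMem (mt (Multiset.mem_of_le hTA) hi),
      Multiset.count_eq_zero_of_notMem (mt (Multiset.mem_of_le hν) hi)]

lemma injOn_and_image_eq_iff_card_fiber {S : Finset α} {f : α → ι} {R T : Finset ι}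
    (hR : ∀ x ∈ S, f x ∈ R) (hT : T ⊆ R) :
    Set.InjOn f S ∧ S.image f = T ↔
      ∀ i ∈ R, #{x ∈ S | f x = i} = if i ∈ T then 1 else 0 := by
  classical
  constructor
  · rintro ⟨hinj, rfl⟩ i -
    split_ifs with hi
    · obtain ⟨x, hx, rfl⟩ := mem_image.1 hi
      refine card_eq_one.2 ⟨x, ext fun y ↦ ?_⟩
      simp only [mem_filter, mem_singleton]
      exact ⟨fun hy ↦ hinj hy.1 hx hy.2, by rintro rfl; exact ⟨hx, rfl⟩⟩
    · rw [card_eq_zero, filter_eq_empty_iff]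
      rintro x hx rfl
      exact hi (mem_image_of_mem f hx)
  · intro h
    have hmem : ∀ x ∈ S, f x ∈ T := by
      intro x hx
      by_contra hxT
      have hempty := h (f x) (hR x hx)
      rw [if_neg hxT, card_eq_zero, filter_eq_empty_iff] at hempty
      exact hempty hx rfl
    refine ⟨fun x hx y hy hxy ↦ ?_, Subset.antisymm (image_subset_iff.2 hmem) fun i hi ↦ ?_⟩
    · have hone := h (f x) (hR x hx)
      rw [if_pos (hmem x hx)] at hone
      exact card_le_one.1 hone.le x (mem_filter.2 ⟨hx, rfl⟩) y (mem_filter.2 ⟨hy, hxy.symm⟩)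
    · have hone := h i (hT hi)
      rw [if_pos hi] at hone
      obtain ⟨x, hx⟩ := card_pos.1 (hone ▸ one_pos)
      obtain ⟨hxS, rfl⟩ := mem_filter.1 hx
      exact mem_image_of_mem f hxS

open scoped Classical in
lemma card_filter_injOn_image_eq (A : Finset α) (f : α → ι) {T : Finset ι}
    (hT : T ⊆ A.image f) :
    #{S ∈ A.powerset | Set.InjOn f (S : Finset α) ∧ S.image f = T} =
      ∏ i ∈ T, #{x ∈ A | f x = i} := by
  have hR : ∀ x ∈ A, f x ∈ A.image f := fun x hx ↦ mem_image_of_mem f hx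
  calc #{S ∈ A.powerset | Set.InjOn f (S : Finset α) ∧ S.image f = T}
      = #{S ∈ A.powerset | ∀ i ∈ A.image f, #{x ∈ S | f x = i} = if i ∈ T then 1 else 0} :=
        congrArg card <| filter_congr fun S hS ↦
          injOn_and_image_eq_iff_card_fiber (fun x hx ↦ hR x (mem_powerset.1 hS hx)) hT
    _ = ∏ i ∈ A.image f, (#{x ∈ A | f x = i}).choose (if i ∈ T then 1 else 0) :=
        card_filter_card_fiber_eq A f _ hR
    _ = ∏ i ∈ A.image f with i ∈ T, #{x ∈ A | f x = i} := by
        rw [prod_filter]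
        refine prod_congr rfl fun i _ ↦ ?_
        split_ifs
        exacts [Nat.choose_one_right _, Nat.choose_zero_right _]
    _ = ∏ i ∈ T, #{x ∈ A | f x = i} := by
        rw [filter_mem_eq_inter, inter_eq_right.2 hT]

end FiberCounting

section MergingParts

variable {L : Type*} [DistribLattice L] [OrderBot L] [DecidableEq L] {a : L}

/-- The partition obtained from `P` by merging all the parts in the nonempty family `T` into a
single part. -/
def mergeParts (P : Finpartition a) {T : Finset L} (hT : T ⊆ P.parts) (hne : T.Nonempty) :
    Finpartition a :=
  (P.ofSubset (sdiff_subset : P.parts \ T ⊆ P.parts) rfl).extend (b := T.sup id)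
    (by
      obtain ⟨t, ht⟩ := hne
      exact fun h ↦ P.ne_bot (hT ht) (le_bot_iff.1 (h ▸ le_sup (f := id) ht)))
    (P.supIndep.disjoint_sup_sup sdiff_subset hT disjoint_sdiff.symm)
    (by rw [← sup_union, sdiff_union_of_subset hT, P.sup_parts])

variable {P Q : Finpartition a} {T : Finset L} (hT : T ⊆ P.parts) (hne : T.Nonempty)

lemma parts_mergeParts : (mergeParts P hT hne).parts = insert (T.sup id) (P.parts \ T) := rfl

lemma card_parts_mergeParts : #(mergeParts P hT hne).parts + #T = #P.parts + 1 := by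
  rw [mergeParts, Finpartition.card_extend, Finpartition.ofSubset_parts, add_right_comm,
    card_sdiff_add_card_eq_card hT]

lemma le_mergeParts : P ≤ mergeParts P hT hne := by
  intro p hp
  by_cases hpT : p ∈ T
  · exact ⟨T.sup id, mem_insert_self _ _, le_sup (f := id) hpT⟩
  · exact ⟨p, mem_insert_of_mem (mem_sdiff.2 ⟨hp, hpT⟩), le_rfl⟩

lemma mergeParts_le (hPQ : P ≤ Q) {q : L} (hq : q ∈ Q.parts) (hTq : ∀ t ∈ T, t ≤ q) :
    mergeParts P hT hne ≤ Q := by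
  intro p hp
  obtain rfl | hp := mem_insert.1 hp
  · exact ⟨q, hq, Finset.sup_le hTq⟩
  · exact hPQ (mem_sdiff.1 hp).1

end MergingParts

section PartOfPoint

variable {α : Type*} [DecidableEq α] {s : Finset α}

lemma part_subset_part_of_le {P Q : Finpartition s} (hPQ : P ≤ Q) {x : α} (hx : x ∈ s) :
    P.part x ⊆ Q.part x := by
  obtain ⟨q, hq, hle⟩ := hPQ (P.part_mem.2 hx)
  rwa [Q.part_eq_of_mem hq (hle (P.mem_part hx))]

lemma image_part (P : Finpartition s) : s.image P.part = P.parts := by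
  ext p
  rw [mem_image]
  refine ⟨?_, fun hp ↦ ?_⟩
  · rintro ⟨x, hx, rfl⟩
    exact P.part_mem.2 hx
  · obtain ⟨x, hx⟩ := P.nonempty_of_mem_parts hp
    exact ⟨x, P.le hp hx, P.part_eq_of_mem hp hx⟩

lemma filter_part_eq (P : Finpartition s) {p : Finset α} (hp : p ∈ P.parts) :
    {x ∈ s | P.part x = p} = p := by
  ext x
  rw [mem_filter]
  refine ⟨?_, fun hx ↦ ⟨P.le hp hx, P.part_eq_of_mem hp hx⟩⟩
  rintro ⟨hx, rfl⟩
  exact P.mem_part hx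

end PartOfPoint

section IntegerPartitions

lemma eq_filter_two_le_add_replicate {s : Multiset ℕ} (h0 : 0 ∉ s) :
    s = s.filter (2 ≤ ·) + Multiset.replicate (s.sum - (s.filter (2 ≤ ·)).sum) 1 := by
  have hones : s.filter (¬ 2 ≤ ·) =
      Multiset.replicate (s.filter (¬ 2 ≤ ·)).card 1 := by
    refine Multiset.eq_replicate_card.2 fun i hi ↦ ?_
    obtain ⟨his, hi⟩ := Multiset.mem_filter.1 hi
    have : i ≠ 0 := ne_of_mem_of_not_mem his h0
    omega
  have hsum : (s.filter (2 ≤ ·)).sum + (s.filter (¬ 2 ≤ ·)).card = s.sum := by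
    conv_rhs => rw [← Multiset.filter_add_not (2 ≤ ·) s, Multiset.sum_add, hones]
    simp
  rw [← hsum, Nat.add_sub_cancel_left, ← hones, Multiset.filter_add_not]

lemma eq_of_filter_two_le_eq {s t : Multiset ℕ} (hs : 0 ∉ s) (ht : 0 ∉ t)
    (hsum : s.sum = t.sum) (h : s.filter (2 ≤ ·) = t.filter (2 ≤ ·)) : s = t := by
  rw [eq_filter_two_le_add_replicate hs, eq_filter_two_le_add_replicate ht, h, hsum]

lemma sum_notMem_of_two_le_card {ν : Multiset ℕ} (h0 : 0 ∉ ν) (hcard : 2 ≤ ν.card) : ν.sum ∉ ν := by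
  intro h
  obtain ⟨μ, hμ⟩ := Multiset.exists_cons_of_mem h
  have hcardμ := congrArg Multiset.card hμ
  have hsumμ := congrArg Multiset.sum hμ
  rw [Multiset.card_cons] at hcardμ
  rw [Multiset.sum_cons] at hsumμ
  obtain ⟨i, hi⟩ := Multiset.card_pos_iff_exists_mem.1 (by omega : 0 < μ.card)
  have hi0 : i = 0 := Multiset.sum_eq_zero_iff.1 (by omega : μ.sum = 0) i hi
  exact h0 (hμ ▸ Multiset.mem_cons_of_mem (hi0 ▸ hi))

lemma eq_of_sum_cons_sub_eq {lam ν μ : Multiset ℕ} (hν : ν ≤ lam) (hμ : μ ≤ lam) (h0 : 0 ∉ ν)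
    (hcard : 2 ≤ ν.card) (h : ν.sum ::ₘ (lam - ν) = μ.sum ::ₘ (lam - μ)) : ν = μ := by
  by_cases hsum : ν.sum = μ.sum
  · rw [hsum, Multiset.cons_inj_right] at h
    exact (tsub_right_inj hν hμ).1 h
  · have hcount := congrArg (Multiset.count ν.sum) h
    rw [Multiset.count_cons_self, Multiset.count_cons_of_ne hsum, Multiset.count_sub,
      Multiset.count_sub,
      Multiset.count_eq_zero_of_notMem (sum_notMem_of_two_le_card h0 hcard)] at hcount
    omega

end IntegerPartitions

section Sizes

variable {α : Type*}

/-- The multiset of the cardinalities of the members of a family of sets. For the family of all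
orbits of a permutation this is its cycle type. -/
def sizes (T : Finset (Finset α)) : Multiset ℕ := T.val.map card

variable [DecidableEq α]

lemma sizes_sdiff {A T : Finset (Finset α)} (hT : T ⊆ A) : sizes (A \ T) = sizes A - sizes T := by
  refine eq_tsub_of_add_eq ?_
  rw [sizes, sizes, ← Multiset.map_add, sdiff_val, Multiset.sub_add_cancel (val_le_iff.2 hT), sizes]

lemma sizes_parts_mergeParts {s : Finset α} {P : Finpartition s} {T : Finset (Finset α)}
    (hT : T ⊆ P.parts) (hne : T.Nonempty) :
    sizes (mergeParts P hT hne).parts = (sizes T).sum ::ₘ (sizes P.parts - sizes T) := by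
  have hdisj : (T : Set (Finset α)).PairwiseDisjoint id := P.disjoint.subset hT
  have hnotMem : T.sup id ∉ P.parts \ T := by
    obtain ⟨t, ht⟩ := hne
    intro h
    obtain ⟨hP, hsup⟩ := mem_sdiff.1 h
    obtain ⟨x, hx⟩ := P.nonempty_of_mem_parts (hT ht)
    exact hsup (P.eq_of_mem_parts (hT ht) hP hx (mem_sup.2 ⟨t, ht, hx⟩) ▸ ht)
  have hcard : #(T.sup id) = (sizes T).sum := by
    rw [sup_eq_biUnion, card_biUnion hdisj]
    rfl
  rw [parts_mergeParts, sizes, insert_val_of_notMem hnotMem, Multiset.map_cons, hcard,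
    ← sizes, sizes_sdiff hT]

end Sizes

section OrbitPartition

variable {α : Type*} [Fintype α] [DecidableEq α]

instance (σ : Perm α) : DecidableRel (SameCycle.setoid σ) :=
  inferInstanceAs (DecidableRel σ.SameCycle)

/-- The partition of `α` into the orbits of `σ`, the fixed points of `σ` being parts of size one. -/
def cyclePartition (σ : Perm α) : Finpartition (univ : Finset α) :=
  Finpartition.ofSetoid (SameCycle.setoid σ)

lemma mem_part_cyclePartition {σ : Perm α} {x y : α} :
    y ∈ (cyclePartition σ).part x ↔ σ.SameCycle x y :=
  Finpartition.mem_part_ofSetoid_iff_rel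

lemma part_cyclePartition_eq_iff {σ : Perm α} {x y : α} :
    (cyclePartition σ).part x = (cyclePartition σ).part y ↔ σ.SameCycle x y := by
  rw [← Finpartition.mem_part_iff_part_eq_part _ (mem_univ _) (mem_univ _),
    mem_part_cyclePartition, sameCycle_comm]

lemma part_cyclePartition_of_mem_support {σ : Perm α} {x : α} (hx : x ∈ σ.support) :
    (cyclePartition σ).part x = (σ.cycleOf x).support := by
  ext y
  rw [mem_part_cyclePartition, mem_support_cycleOf_iff, and_iff_left hx]

lemma part_cyclePartition_of_notMem_support {σ : Perm α} {x : α} (hx : x ∉ σ.support) :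
    (cyclePartition σ).part x = {x} := by
  ext y
  rw [mem_part_cyclePartition, mem_singleton, eq_comm]
  exact ⟨fun h ↦ h.eq_of_left (notMem_support.1 hx), fun h ↦ h ▸ SameCycle.refl _ _⟩

lemma filter_parts_cyclePartition (σ : Perm α) :
    {p ∈ (cyclePartition σ).parts | 2 ≤ #p} = σ.cycleFactorsFinset.image support := by
  ext p
  simp only [mem_filter, mem_image]
  constructor
  · rintro ⟨hp, hcard⟩
    obtain ⟨x, hx⟩ := (cyclePartition σ).nonempty_of_mem_parts hp
    obtain rfl := (cyclePartition σ).part_eq_of_mem hp hx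
    have hxσ : x ∈ σ.support := by
      by_contra hxσ
      rw [part_cyclePartition_of_notMem_support hxσ, card_singleton] at hcard
      omega
    exact ⟨σ.cycleOf x, cycleOf_mem_cycleFactorsFinset_iff.2 hxσ,
      (part_cyclePartition_of_mem_support hxσ).symm⟩
  · rintro ⟨c, hc, rfl⟩
    have hcyc := (mem_cycleFactorsFinset_iff.1 hc).1
    obtain ⟨x, hx⟩ := hcyc.nonempty_support
    refine ⟨?_, hcyc.two_le_card_support⟩
    rw [cycle_is_cycleOf hx hc,
      ← part_cyclePartition_of_mem_support (mem_cycleFactorsFinset_support_le hc hx)]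
    exact (cyclePartition σ).part_mem.2 (mem_univ x)

lemma zero_notMem_parts_partition (σ : Perm α) : 0 ∉ σ.partition.parts :=
  fun h ↦ (σ.partition.parts_pos h).ne rfl

lemma sizes_parts_cyclePartition (σ : Perm α) :
    sizes (cyclePartition σ).parts = σ.partition.parts := by
  refine eq_of_filter_two_le_eq ?_ ?_ ?_ ?_
  · intro h
    obtain ⟨p, hp, hp0⟩ := Multiset.mem_map.1 h
    exact (cyclePartition σ).ne_empty hp (card_eq_zero.1 hp0)
  · exact zero_notMem_parts_partition σ
  · rw [σ.partition.parts_sum]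
    exact (cyclePartition σ).sum_card_parts
  · have hinj : Set.InjOn support (σ.cycleFactorsFinset : Set (Perm α)) := by
      intro c hc d hd hcd
      obtain ⟨x, hx⟩ := (mem_cycleFactorsFinset_iff.1 hc).1.nonempty_support
      rw [cycle_is_cycleOf hx hc, cycle_is_cycleOf (hcd ▸ hx) hd]
    have hfilter : (cyclePartition σ).parts.val.filter ((2 ≤ ·) ∘ card) =
        σ.cycleFactorsFinset.val.map support := by
      rw [← image_val_of_injOn hinj, ← filter_parts_cyclePartition]
      rfl
    rw [filter_parts_partition_eq_cycleType, cycleType_def, sizes, Multiset.filter_map, hfilter,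
      Multiset.map_map]

lemma cyclePartition_le_iff {σ : Perm α} {Q : Finpartition (univ : Finset α)} :
    cyclePartition σ ≤ Q ↔ ∀ x, Q.part (σ x) = Q.part x := by
  have part_eq_iff {x y} : Q.part x = Q.part y ↔ x ∈ Q.part y :=
    (Q.mem_part_iff_part_eq_part (mem_univ x) (mem_univ y)).symm
  constructor
  · intro h x
    exact part_eq_iff.2 <| part_subset_part_of_le h (mem_univ x) <|
      mem_part_cyclePartition.2 (sameCycle_apply_right.2 (SameCycle.refl σ x))
  · intro h p hp
    obtain ⟨x, hx⟩ := (cyclePartition σ).nonempty_of_mem_parts hp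
    obtain rfl := (cyclePartition σ).part_eq_of_mem hp hx
    refine ⟨Q.part x, Q.part_mem.2 (mem_univ x), fun y hy ↦ ?_⟩
    obtain ⟨i, -, rfl⟩ := (mem_part_cyclePartition.1 hy).exists_pow_eq'
    rw [← part_eq_iff]
    clear hy
    induction i with
    | zero => rfl
    | succ i ih => rw [pow_succ', Perm.mul_apply, h, ih]

lemma cyclePartition_mul_le {σ τ : Perm α} {Q : Finpartition (univ : Finset α)}
    (hτ : cyclePartition τ ≤ Q) (hσ : cyclePartition σ ≤ Q) : cyclePartition (τ * σ) ≤ Q := by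
  rw [cyclePartition_le_iff] at hτ hσ ⊢
  exact fun x ↦ (hτ (σ x)).trans (hσ x)

end OrbitPartition

section CycleMul

variable {α : Type*} [Fintype α] [DecidableEq α] {σ τ : Perm α}

/-- The lengths of the cycles of `σ`, fixed points included, that meet `S`. With the support of a
cycle `τ` for `S`, this is the partition `ν` of the cup product formula. -/
def metCycleType (σ : Perm α) (S : Finset α) : Multiset ℕ :=
  sizes (S.image (cyclePartition σ).part)

lemma image_part_subset_parts (σ : Perm α) (S : Finset α) :
    S.image (cyclePartition σ).part ⊆ (cyclePartition σ).parts :=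
  image_subset_iff.2 fun x _ ↦ (cyclePartition σ).part_mem.2 (mem_univ x)

lemma metCycleType_le (σ : Perm α) (S : Finset α) : metCycleType σ S ≤ σ.partition.parts := by
  rw [← sizes_parts_cyclePartition]
  exact Multiset.map_le_map (val_le_iff.2 (image_part_subset_parts σ S))

lemma card_metCycleType {S : Finset α} (hS : Set.InjOn (cyclePartition σ).part S) :
    (metCycleType σ S).card = #S := by
  rw [metCycleType, sizes, Multiset.card_map]
  exact card_image_iff.2 hS

/-- The orbit partition of `σ` with all the orbits that meet `S` merged into one, to be compared
with the orbit partition of `τ * σ` when `S` is the support of `τ`. -/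
def mergeMetCycles (σ : Perm α) {S : Finset α} (hS : S.Nonempty) :
    Finpartition (univ : Finset α) :=
  mergeParts (cyclePartition σ) (image_part_subset_parts σ S) (hS.image _)

lemma part_mergeMetCycles {S : Finset α} (hS : S.Nonempty) {x : α} (hx : x ∈ S) :
    (mergeMetCycles σ hS).part x = (S.image (cyclePartition σ).part).sup id :=
  Finpartition.part_eq_of_mem _ (mem_insert_self _ _) <|
    mem_sup.2 ⟨_, mem_image_of_mem _ hx, (cyclePartition σ).mem_part (mem_univ x)⟩

lemma cyclePartition_mul_le_mergeMetCycles (hτ : τ.support.Nonempty) :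
    cyclePartition (τ * σ) ≤ mergeMetCycles σ hτ := by
  refine cyclePartition_mul_le (cyclePartition_le_iff.2 fun x ↦ ?_) (le_mergeParts _ _)
  by_cases hx : x ∈ τ.support
  · rw [part_mergeMetCycles hτ hx, part_mergeMetCycles hτ (apply_mem_support.2 hx)]
  · rw [notMem_support.1 hx]

lemma card_parts_partition (σ : Perm α) :
    σ.partition.parts.card = #(cyclePartition σ).parts := by
  rw [← sizes_parts_cyclePartition, sizes, Multiset.card_map, card_def]

lemma injOn_part_of_card_parts_mul_le (hτ : τ.support.Nonempty)
    (h : (τ * σ).partition.parts.card + #τ.support ≤ σ.partition.parts.card + 1) :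
    Set.InjOn (cyclePartition σ).part τ.support := by
  have hmerge : #(mergeMetCycles σ hτ).parts + _ = _ :=
    card_parts_mergeParts (image_part_subset_parts σ τ.support) (hτ.image _)
  have hle := Finpartition.card_mono (cyclePartition_mul_le_mergeMetCycles (σ := σ) hτ)
  have himage := card_image_le (s := τ.support) (f := (cyclePartition σ).part)
  rw [card_parts_partition, card_parts_partition] at h
  exact card_image_iff.1 (by omega)

-- Along the `σ`-orbit of `a`, the permutations `σ` and `τ * σ` differ only on arriving at `a`.
lemma sameCycle_mul_pow_apply (hinj : Set.InjOn (cyclePartition σ).part τ.support) {a : α}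
    (ha : a ∈ τ.support) (i : ℕ) : (τ * σ).SameCycle ((σ ^ i) a) a := by
  induction i with
  | zero => exact SameCycle.refl _ _
  | succ i ih =>
    by_cases hmem : (σ ^ (i + 1)) a ∈ τ.support
    · rw [hinj hmem ha (part_cyclePartition_eq_iff.2 (sameCycle_pow_left.2 (SameCycle.refl σ a)))]
    · have happly : (τ * σ) ((σ ^ i) a) = (σ ^ (i + 1)) a := by
        rw [← notMem_support.1 hmem, pow_succ', Perm.mul_apply, Perm.mul_apply]
      rwa [← happly, sameCycle_apply_left]

lemma sameCycle_mul_apply_right (hinj : Set.InjOn (cyclePartition σ).part τ.support) (x : α) :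
    (τ * σ).SameCycle (σ x) x := by
  by_cases hx : σ x ∈ τ.support
  · have hcycle : σ.SameCycle (σ x) x := sameCycle_apply_left.2 (SameCycle.refl σ x)
    obtain ⟨i, -, hi⟩ := hcycle.exists_pow_eq'
    simpa only [hi] using (sameCycle_mul_pow_apply hinj hx i).symm
  · have happly : (τ * σ) x = σ x := notMem_support.1 hx
    rw [← happly, sameCycle_apply_left]

lemma sameCycle_mul_apply_left (hinj : Set.InjOn (cyclePartition σ).part τ.support) (y : α) :
    (τ * σ).SameCycle (τ y) y := by
  obtain ⟨x, rfl⟩ := σ.surjective y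
  exact ((sameCycle_mul_apply_right hinj x).trans (sameCycle_apply_right.2 (.refl _ x))).symm

lemma mergeMetCycles_le_cyclePartition_mul (hτ : τ.IsCycle)
    (hinj : Set.InjOn (cyclePartition σ).part τ.support) :
    mergeMetCycles σ hτ.nonempty_support ≤ cyclePartition (τ * σ) := by
  have hσle : cyclePartition σ ≤ cyclePartition (τ * σ) :=
    cyclePartition_le_iff.2 fun x ↦
      part_cyclePartition_eq_iff.2 (sameCycle_mul_apply_right hinj x)
  have hτle : cyclePartition τ ≤ cyclePartition (τ * σ) :=
    cyclePartition_le_iff.2 fun x ↦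
      part_cyclePartition_eq_iff.2 (sameCycle_mul_apply_left hinj x)
  obtain ⟨a, ha⟩ := hτ.nonempty_support
  refine mergeParts_le _ _ hσle ((cyclePartition (τ * σ)).part_mem.2 (mem_univ a)) ?_
  intro t ht
  obtain ⟨b, hb, rfl⟩ := mem_image.1 ht
  have hab : b ∈ (cyclePartition (τ * σ)).part a :=
    part_subset_part_of_le hτle (mem_univ a) <| mem_part_cyclePartition.2 <|
      hτ.sameCycle (mem_support.1 ha) (mem_support.1 hb)
  rw [part_cyclePartition_eq_iff.2 (mem_part_cyclePartition.1 hab)]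
  exact part_subset_part_of_le hσle (mem_univ b)

lemma parts_partition_cycle_mul (hτ : τ.IsCycle)
    (hinj : Set.InjOn (cyclePartition σ).part τ.support) :
    (τ * σ).partition.parts = (metCycleType σ τ.support).sum ::ₘ
      (σ.partition.parts - metCycleType σ τ.support) := by
  rw [← sizes_parts_cyclePartition,
    (cyclePartition_mul_le_mergeMetCycles hτ.nonempty_support).antisymm
      (mergeMetCycles_le_cyclePartition_mul hτ hinj),
    mergeMetCycles, sizes_parts_mergeParts, sizes_parts_cyclePartition, metCycleType]

variable (α) in
/-- The cycles of length `m`, as permutations of the whole type `α`. -/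
def cyclesOfLength (m : ℕ) : Finset (Perm α) :=
  {τ | τ.cycleType = {m}}

lemma mem_cyclesOfLength {m : ℕ} : τ ∈ cyclesOfLength α m ↔ τ.cycleType = {m} :=
  mem_filter_univ τ

lemma isCycle_of_mem_cyclesOfLength {m : ℕ} (hτ : τ ∈ cyclesOfLength α m) : τ.IsCycle :=
  card_cycleType_eq_one.1 (by rw [mem_cyclesOfLength.1 hτ, Multiset.card_singleton])

lemma card_support_of_mem_cyclesOfLength {m : ℕ} (hτ : τ ∈ cyclesOfLength α m) :
    #τ.support = m := by
  rw [← sum_cycleType, mem_cyclesOfLength.1 hτ, Multiset.sum_singleton]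

lemma parts_partition_cycle_mul_eq_iff {m : ℕ} (hτ : τ ∈ cyclesOfLength α m) {ν : Multiset ℕ}
    (hν : ν ≤ σ.partition.parts) (hcard : ν.card = m) :
    (τ * σ).partition.parts = ν.sum ::ₘ (σ.partition.parts - ν) ↔
      Set.InjOn (cyclePartition σ).part τ.support ∧ metCycleType σ τ.support = ν := by
  have hcycle := isCycle_of_mem_cyclesOfLength hτ
  have hsupport := card_support_of_mem_cyclesOfLength hτ
  constructor
  · intro h
    have hinj : Set.InjOn (cyclePartition σ).part τ.support := by
      refine injOn_part_of_card_parts_mul_le hcycle.nonempty_support ?_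
      have := Multiset.card_le_card hν
      rw [h, Multiset.card_cons, Multiset.card_sub hν]
      omega
    refine ⟨hinj, (eq_of_sum_cons_sub_eq hν (metCycleType_le σ _) ?_ ?_ ?_).symm⟩
    · exact mt (Multiset.mem_of_le hν) (zero_notMem_parts_partition σ)
    · exact hcard ▸ hsupport ▸ hcycle.two_le_card_support
    · rw [← h, parts_partition_cycle_mul hcycle hinj]
  · rintro ⟨hinj, rfl⟩
    exact parts_partition_cycle_mul hcycle hinj

end CycleMul

section CountingTransversals

variable {α : Type*} [DecidableEq α] {s : Finset α}

open scoped Classical in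
lemma card_filter_injOn_part_image_part_eq (P : Finpartition s) {T : Finset (Finset α)}
    (hT : T ⊆ P.parts) :
    #{S ∈ s.powerset | Set.InjOn P.part (S : Finset α) ∧ S.image P.part = T} = (sizes T).prod := by
  rw [card_filter_injOn_image_eq s P.part (by rwa [image_part])]
  exact prod_congr rfl fun p hp ↦ by rw [filter_part_eq P (hT hp)]

open scoped Classical in
lemma card_filter_injOn_part (P : Finpartition s) {ν : Multiset ℕ}
    (hν : ν ≤ sizes P.parts) :
    #{S ∈ s.powerset | Set.InjOn P.part (S : Finset α) ∧ sizes (S.image P.part) = ν} =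
      ν.prod * ∏ i ∈ (sizes P.parts).toFinset, ((sizes P.parts).count i).choose (ν.count i) := by
  calc #{S ∈ s.powerset | Set.InjOn P.part (S : Finset α) ∧ sizes (S.image P.part) = ν}
      = #{T ∈ P.parts.powerset | sizes T = ν} * ν.prod := by
        rw [card_eq_sum_card_fiberwise (f := fun S : Finset α ↦ S.image P.part)
          (t := {T ∈ P.parts.powerset | sizes T = ν})]
        · refine sum_const_nat fun T hT ↦ ?_
          obtain ⟨hTP, rfl⟩ := mem_filter.1 hT
          rw [← card_filter_injOn_part_image_part_eq P (mem_powerset.1 hTP), filter_filter]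
          congr 1
          refine filter_congr fun S _ ↦ ?_
          exact ⟨fun h ↦ ⟨h.1.1, h.2⟩, fun h ↦ ⟨⟨h.1, by rw [h.2]⟩, h.2⟩⟩
        · intro S hS
          obtain ⟨hS, -, hsizes⟩ := mem_filter.1 hS
          refine mem_coe.2 (mem_filter.2 ⟨mem_powerset.2 ?_, hsizes⟩)
          rw [← image_part P]
          exact image_subset_image (mem_powerset.1 hS)
    _ = ν.prod * ∏ i ∈ (sizes P.parts).toFinset,
          ((sizes P.parts).count i).choose (ν.count i) := by
        rw [mul_comm]
        exact congrArg (ν.prod * ·) (card_filter_val_map_eq P.parts card hν)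

end CountingTransversals

section CountingCycles

variable {α : Type*} [Fintype α] [DecidableEq α]

lemma card_filter_cyclesOfLength_support_eq {k : ℕ} (hk : 1 ≤ k) {S : Finset α}
    (hS : #S = k + 1) : #{τ ∈ cyclesOfLength α (k + 1) | τ.support = S} = k ! := by
  have hcard : #(cyclesOfLength S (k + 1)) = k ! := by
    have h := card_of_cycleType_singleton (α := S) (n := k + 1) (by omega)
      (by rw [Fintype.card_coe, hS])
    rwa [Fintype.card_coe, hS, Nat.choose_self, mul_one] at h
  rw [← hcard]
  symm
  refine card_bij (fun π _ ↦ ofSubtype π) ?_ ?_ ?_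
  · intro π hπ
    have hmem : ofSubtype π ∈ cyclesOfLength α (k + 1) := by
      rw [mem_cyclesOfLength, cycleType_ofSubtype, mem_cyclesOfLength.1 hπ]
    refine mem_filter.2 ⟨hmem, ?_⟩
    refine eq_of_subset_of_card_le ?_ ?_
    · rw [support_ofSubtype]
      intro x hx
      obtain ⟨y, -, rfl⟩ := mem_map.1 hx
      exact y.2
    · rw [hS, card_support_of_mem_cyclesOfLength hmem]
  · exact fun π _ π' _ h ↦ ofSubtype_injective h
  · intro τ hτ
    obtain ⟨htype, rfl⟩ := mem_filter.1 hτ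
    have hmem : ∀ x, τ x ∈ τ.support ↔ x ∈ τ.support := fun x ↦ apply_mem_support
    have heq : ofSubtype (τ.subtypePerm hmem) = τ :=
      ofSubtype_subtypePerm hmem fun x hx ↦ mem_support.2 hx
    refine ⟨τ.subtypePerm hmem, ?_, heq⟩
    rw [mem_cyclesOfLength, ← cycleType_ofSubtype, heq, mem_cyclesOfLength.1 htype]

lemma card_filter_parts_partition_mul (σ : Perm α) {ν : Multiset ℕ} {k : ℕ} (hk : 1 ≤ k)
    (hν : ν ≤ σ.partition.parts) (hcard : ν.card = k + 1) :
    #{τ ∈ cyclesOfLength α (k + 1) |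
        (τ * σ).partition.parts = ν.sum ::ₘ (σ.partition.parts - ν)} =
      k ! * (ν.prod * ∏ i ∈ σ.partition.parts.toFinset,
        (σ.partition.parts.count i).choose (ν.count i)) := by
  classical
  let good : Finset (Finset α) :=
    {S ∈ univ.powerset | Set.InjOn (cyclePartition σ).part (S : Finset α) ∧ metCycleType σ S = ν}
  have hgood : #good = ν.prod * ∏ i ∈ σ.partition.parts.toFinset,
      (σ.partition.parts.count i).choose (ν.count i) := by
    rw [← sizes_parts_cyclePartition] at hν ⊢
    exact card_filter_injOn_part _ hν
  have hcycle {τ : Perm α} (hτ : τ ∈ cyclesOfLength α (k + 1)) :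
      (τ * σ).partition.parts = ν.sum ::ₘ (σ.partition.parts - ν) ↔ τ.support ∈ good := by
    rw [parts_partition_cycle_mul_eq_iff hτ hν hcard, mem_filter,
      and_iff_right (mem_powerset.2 (subset_univ _))]
  have hsize : ∀ S ∈ good, #S = k + 1 := by
    intro S hS
    obtain ⟨-, hinj, rfl⟩ := mem_filter.1 hS
    rw [← hcard, card_metCycleType hinj]
  rw [← hgood, mul_comm, card_eq_sum_card_fiberwise (f := support) (t := good)]
  · refine sum_const_nat fun S hS ↦ ?_
    rw [← card_filter_cyclesOfLength_support_eq hk (hsize S hS), filter_filter]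
    congr 1
    refine filter_congr fun τ hτ ↦ and_iff_right_of_imp fun h ↦ ?_
    exact (hcycle hτ).2 (h ▸ hS)
  · intro τ hτ
    obtain ⟨hτ, hprod⟩ := mem_filter.1 hτ
    exact (hcycle hτ).1 hprod

end CountingCycles

section MultiplicityFactorials

variable {ι : Type*} [DecidableEq ι]

/-- The product `∏ i, γᵢ!` of the factorials of the multiplicities of `s = (1^γ₁ 2^γ₂ …)`. -/
def countFactorial (s : Multiset ι) : ℕ := ∏ i ∈ s.toFinset, (s.count i)!

lemma countFactorial_eq_prod_of_subset {s : Multiset ι} {R : Finset ι} (hR : s.toFinset ⊆ R) :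
    countFactorial s = ∏ i ∈ R, (s.count i)! := by
  refine prod_subset hR fun i _ hi ↦ ?_
  rw [Multiset.count_eq_zero_of_notMem (mt Multiset.mem_toFinset.2 hi), Nat.factorial_zero]

lemma countFactorial_pos (s : Multiset ι) : 0 < countFactorial s :=
  prod_pos fun _ _ ↦ Nat.factorial_pos _

lemma countFactorial_cons (a : ι) (s : Multiset ι) :
    countFactorial (a ::ₘ s) = (s.count a + 1) * countFactorial s := by
  have hsub : s.toFinset ⊆ (a ::ₘ s).toFinset :=
    Multiset.toFinset_subset.2 (Multiset.subset_cons s a)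
  have hfactor (i : ι) : ((a ::ₘ s).count i)! =
      (if i = a then s.count a + 1 else 1) * (s.count i)! := by
    rw [Multiset.count_cons]
    split_ifs with hi
    · rw [hi, Nat.factorial_succ]
    · rw [add_zero, one_mul]
  rw [countFactorial, countFactorial_eq_prod_of_subset hsub]
  simp_rw [hfactor]
  rw [prod_mul_distrib, prod_ite_eq', if_pos (Multiset.mem_toFinset.2 (Multiset.mem_cons_self a s))]

lemma countFactorial_add_replicate {a : ι} {s : Multiset ι} (ha : a ∉ s) (j : ℕ) :
    countFactorial (s + Multiset.replicate j a) = countFactorial s * j ! := by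
  induction j with
  | zero => simp
  | succ j ih =>
    rw [Multiset.replicate_succ, Multiset.add_cons, countFactorial_cons, ih, Multiset.count_add,
      Multiset.count_eq_zero_of_notMem ha, Multiset.count_replicate_self, Nat.factorial_succ]
    ring

lemma prod_choose_count_mul_countFactorial {s t : Multiset ι} (hts : t ≤ s) :
    (∏ i ∈ s.toFinset, (s.count i).choose (t.count i)) * countFactorial t *
      countFactorial (s - t) = countFactorial s := by
  rw [countFactorial_eq_prod_of_subset (Multiset.toFinset_subset.2 (Multiset.subset_of_le hts)),
    countFactorial_eq_prod_of_subset
      (Multiset.toFinset_subset.2 (Multiset.subset_of_le (Multiset.sub_le_self s t))),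
    countFactorial, ← prod_mul_distrib, ← prod_mul_distrib]
  refine prod_congr rfl fun i _ ↦ ?_
  rw [Multiset.count_sub, Nat.choose_mul_factorial_mul_factorial (Multiset.count_le_of_le i hts)]

end MultiplicityFactorials

section ConjugacyClasses

/-- The order `∏ i, i ^ αᵢ * αᵢ!` of the centralizer of a permutation of cycle type
`lam = (1^α₁ 2^α₂ …)`. -/
def centralizerOrder (lam : Multiset ℕ) : ℕ := lam.prod * countFactorial lam

lemma centralizerOrder_pos {lam : Multiset ℕ} (h0 : 0 ∉ lam) : 0 < centralizerOrder lam :=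
  Nat.mul_pos (Nat.pos_of_ne_zero (Multiset.prod_ne_zero h0)) (countFactorial_pos lam)

lemma centralizerOrder_sum_cons_sub {lam ν : Multiset ℕ} (hν : ν ≤ lam) (hsum : ν.sum ∉ ν) :
    centralizerOrder (ν.sum ::ₘ (lam - ν)) *
        (ν.prod * ∏ i ∈ lam.toFinset, (lam.count i).choose (ν.count i)) * countFactorial ν =
      ν.sum * (lam.count ν.sum + 1) * centralizerOrder lam := by
  have hprod : ν.prod * (lam - ν).prod = lam.prod := by
    rw [← Multiset.prod_add, add_tsub_cancel_of_le hν]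
  rw [centralizerOrder, centralizerOrder, Multiset.prod_cons, countFactorial_cons,
    Multiset.count_sub, Multiset.count_eq_zero_of_notMem hsum, tsub_zero, ← hprod,
    ← prod_choose_count_mul_countFactorial hν]
  ring

variable {α : Type*} [Fintype α] [DecidableEq α]

variable (α) in
/-- The permutations of `α` whose cycle type, fixed points included, is `lam`. -/
def permsOfType (lam : Multiset ℕ) : Finset (Perm α) := {σ | σ.partition.parts = lam}

lemma mem_permsOfType {σ : Perm α} {lam : Multiset ℕ} :
    σ ∈ permsOfType α lam ↔ σ.partition.parts = lam :=
  mem_filter_univ σ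

lemma permsOfType_eq_filter_cycleType {lam : Multiset ℕ} (h0 : 0 ∉ lam)
    (hsum : lam.sum = Fintype.card α) :
    permsOfType α lam = ({σ | σ.cycleType = lam.filter (2 ≤ ·)} : Finset (Perm α)) := by
  ext σ
  rw [mem_permsOfType, mem_filter_univ, ← filter_parts_partition_eq_cycleType]
  refine ⟨fun h ↦ by rw [h], eq_of_filter_two_le_eq (zero_notMem_parts_partition σ) h0 ?_⟩
  rw [hsum, σ.partition.parts_sum]

lemma card_permsOfType_mul_centralizerOrder {lam : Multiset ℕ} (h0 : 0 ∉ lam)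
    (hsum : lam.sum = Fintype.card α) :
    #(permsOfType α lam) * centralizerOrder lam = (Fintype.card α)! := by
  set m := lam.filter (2 ≤ ·) with hm
  have hlam := eq_filter_two_le_add_replicate h0
  rw [← hm, hsum] at hlam
  have hone : 1 ∉ m := fun h ↦ by simpa using Multiset.of_mem_filter h
  have hsplit := congrArg Multiset.sum (Multiset.filter_add_not (2 ≤ ·) lam)
  rw [Multiset.sum_add, ← hm, hsum] at hsplit
  have hbound : m.sum ≤ Fintype.card α ∧ ∀ i ∈ m, 2 ≤ i :=
    ⟨by omega, fun i hi ↦ Multiset.of_mem_filter hi⟩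
  have h := card_of_cycleType_mul_eq α m
  rw [if_pos hbound] at h
  rw [permsOfType_eq_filter_cycleType h0 hsum, ← hm, ← h, centralizerOrder, hlam, Multiset.prod_add,
    countFactorial_add_replicate hone, Multiset.prod_replicate, one_pow, mul_one, countFactorial]
  ring

end ConjugacyClasses

section CycleFactorizations

variable {α : Type*} [Fintype α] [DecidableEq α]

variable (α) in
/-- The pairs of a `(k + 1)`-cycle and a permutation of type `lam` whose product has type `mu`. -/
def cycleFactorizations (k : ℕ) (lam mu : Multiset ℕ) : Finset (Perm α × Perm α) :=
  {p ∈ cyclesOfLength α (k + 1) ×ˢ permsOfType α lam | p.1 * p.2 ∈ permsOfType α mu}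

lemma card_cycleFactorizations {lam ν : Multiset ℕ} {k : ℕ} (hk : 1 ≤ k)
    (hν : ν ≤ lam) (hcard : ν.card = k + 1) :
    #(cycleFactorizations α k lam (ν.sum ::ₘ (lam - ν))) =
      #(permsOfType α lam) * (k ! * (ν.prod * ∏ i ∈ lam.toFinset,
        (lam.count i).choose (ν.count i))) := by
  have hsnd : ∀ p ∈ cycleFactorizations α k lam (ν.sum ::ₘ (lam - ν)),
      p.2 ∈ permsOfType α lam :=
    fun p hp ↦ (mem_product.1 (mem_filter.1 hp).1).2
  rw [card_eq_sum_card_fiberwise hsnd]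
  refine sum_const_nat fun σ hσ ↦ ?_
  obtain rfl := mem_permsOfType.1 hσ
  rw [← card_filter_parts_partition_mul σ hk hν hcard]
  refine card_nbij' Prod.fst (·, σ) ?_ ?_ ?_ ?_
  · rintro ⟨τ, _⟩ hp
    obtain ⟨hp, rfl⟩ := mem_filter.1 hp
    obtain ⟨hp, hprod⟩ := mem_filter.1 hp
    exact mem_coe.2 (mem_filter.2 ⟨(mem_product.1 hp).1, mem_permsOfType.1 hprod⟩)
  · intro τ hτ
    obtain ⟨hτ, hprod⟩ := mem_filter.1 hτ
    exact mem_filter.2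
      ⟨mem_filter.2 ⟨mk_mem_product hτ hσ, mem_permsOfType.2 hprod⟩, rfl⟩
  · rintro ⟨τ, _⟩ hp
    rw [← (mem_filter.1 hp).2]
  · exact fun _ _ ↦ rfl

lemma card_cycleFactorizations_mul_countFactorial {lam ν : Multiset ℕ} {k : ℕ} (hk : 1 ≤ k)
    (h0 : 0 ∉ lam) (hsum : lam.sum = Fintype.card α) (hν : ν ≤ lam) (hcard : ν.card = k + 1) :
    #(cycleFactorizations α k lam (ν.sum ::ₘ (lam - ν))) * countFactorial ν =
      k ! * ν.sum * (lam.count ν.sum + 1) * #(permsOfType α (ν.sum ::ₘ (lam - ν))) := by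
  have h0ν : 0 ∉ ν := mt (Multiset.mem_of_le hν) h0
  have h0' : 0 ∉ ν.sum ::ₘ (lam - ν) := by
    rw [Multiset.mem_cons, not_or]
    refine ⟨fun hν0 ↦ ?_, mt (Multiset.mem_of_le (Multiset.sub_le_self lam ν)) h0⟩
    obtain ⟨i, hi⟩ := Multiset.card_pos_iff_exists_mem.1 (by omega : 0 < ν.card)
    exact h0ν (Multiset.sum_eq_zero_iff.1 hν0.symm i hi ▸ hi)
  have hsum' : (ν.sum ::ₘ (lam - ν)).sum = Fintype.card α := by
    rw [Multiset.sum_cons, ← Multiset.sum_add, add_tsub_cancel_of_le hν, hsum]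
  refine Nat.eq_of_mul_eq_mul_right (centralizerOrder_pos h0') ?_
  rw [card_cycleFactorizations hk hν hcard]
  calc _ = #(permsOfType α lam) * k ! * (centralizerOrder (ν.sum ::ₘ (lam - ν)) *
        (ν.prod * ∏ i ∈ lam.toFinset, (lam.count i).choose (ν.count i)) * countFactorial ν) := by
        ring
    _ = k ! * ν.sum * (lam.count ν.sum + 1) * (#(permsOfType α lam) * centralizerOrder lam) := by
        rw [centralizerOrder_sum_cons_sub hν (sum_notMem_of_two_le_card h0ν (by omega))]
        ring
    _ = _ := by
        rw [card_permsOfType_mul_centralizerOrder h0 hsum,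
          ← card_permsOfType_mul_centralizerOrder h0' hsum']
        ring

end CycleFactorizations

section ProductSums

lemma sum_comp_eq_smul_sum {X ι R M : Type*} [DivisionRing R] [CharZero R] [AddCommGroup M]
    [Module R M] [DecidableEq ι] {A : Finset X} {C : Finset ι} {f : X → ι}
    (hf : ∀ x ∈ A, f x ∈ C)
    (hcard : ∀ i ∈ C, ∀ j ∈ C, #{x ∈ A | f x = i} = #{x ∈ A | f x = j}) (g : ι → M) :
    ∑ x ∈ A, g (f x) = ((#A : R) / #C) • ∑ i ∈ C, g i := by
  rw [← sum_fiberwise_of_maps_to hf, smul_sum]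
  refine sum_congr rfl fun i hi ↦ ?_
  have hC : (#C : R) ≠ 0 := Nat.cast_ne_zero.2 (card_ne_zero_of_mem hi)
  have hA : #A = #{x ∈ A | f x = i} * #C := by
    rw [card_eq_sum_card_fiberwise hf, mul_comm]
    exact sum_const_nat fun j hj ↦ hcard j hj i hi
  calc ∑ x ∈ A with f x = i, g (f x) = ∑ x ∈ A with f x = i, g i :=
        sum_congr rfl fun x hx ↦ by rw [(mem_filter.1 hx).2]
    _ = ((#A : R) / #C) • g i := by
        rw [sum_const, hA, Nat.cast_mul, mul_div_cancel_right₀ _ hC, Nat.cast_smul_eq_nsmul]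

lemma sum_mul_eq_smul_sum {G R M : Type*} [Group G] [DivisionRing R] [CharZero R]
    [AddCommGroup M] [Module R M] {A : Finset (G × G)} {C : Finset G}
    (hA : ∀ g p, p ∈ A ↔ (g * p.1 * g⁻¹, g * p.2 * g⁻¹) ∈ A)
    (hAC : ∀ p ∈ A, p.1 * p.2 ∈ C) (hC : ∀ x ∈ C, ∀ y ∈ C, IsConj x y) (F : G → M) :
    ∑ p ∈ A, F (p.1 * p.2) = ((#A : R) / #C) • ∑ x ∈ C, F x := by
  classical
  refine sum_comp_eq_smul_sum hAC (fun x hx y hy ↦ ?_) F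
  obtain ⟨g, rfl⟩ := isConj_iff.1 (hC x hx y hy)
  refine card_equiv ((MulAut.conj g).toEquiv.prodCongr (MulAut.conj g).toEquiv) fun p ↦ ?_
  rw [mem_filter, mem_filter]
  refine and_congr (hA g p) ?_
  change _ ↔ MulAut.conj g p.1 * MulAut.conj g p.2 = MulAut.conj g x
  rw [← map_mul, (MulAut.conj g).injective.eq_iff]

variable {α : Type*} [Fintype α] [DecidableEq α]

lemma conj_mem_permsOfType {g σ : Perm α} {lam : Multiset ℕ} :
    g * σ * g⁻¹ ∈ permsOfType α lam ↔ σ ∈ permsOfType α lam := by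
  rw [mem_permsOfType, mem_permsOfType,
    partition_eq_of_isConj.1 (isConj_iff.2 ⟨g, rfl⟩ : IsConj σ (g * σ * g⁻¹))]

lemma isConj_of_mem_permsOfType {σ τ : Perm α} {lam : Multiset ℕ} (hσ : σ ∈ permsOfType α lam)
    (hτ : τ ∈ permsOfType α lam) : IsConj σ τ :=
  partition_eq_of_isConj.2 <| Nat.Partition.ext <|
    (mem_permsOfType.1 hσ).trans (mem_permsOfType.1 hτ).symm

lemma conj_mem_cycleFactorizations {k : ℕ} {lam mu : Multiset ℕ} (g : Perm α)
    (p : Perm α × Perm α) :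
    p ∈ cycleFactorizations α k lam mu ↔
      (g * p.1 * g⁻¹, g * p.2 * g⁻¹) ∈ cycleFactorizations α k lam mu := by
  have hmul : g * p.1 * g⁻¹ * (g * p.2 * g⁻¹) = g * (p.1 * p.2) * g⁻¹ := by group
  rw [cycleFactorizations, mem_filter, mem_filter, mem_product, mem_product, mem_cyclesOfLength,
    mem_cyclesOfLength, cycleType_conj, hmul, conj_mem_permsOfType, conj_mem_permsOfType]

lemma sum_cycleFactorizations {R M : Type*} [Field R] [CharZero R] [AddCommGroup M] [Module R M]
    {lam ν : Multiset ℕ} {k : ℕ} (hk : 1 ≤ k)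
    (h0 : 0 ∉ lam) (hsum : lam.sum = Fintype.card α) (hν : ν ≤ lam) (hcard : ν.card = k + 1)
    (F : Perm α → M) :
    ∑ p ∈ cycleFactorizations α k lam (ν.sum ::ₘ (lam - ν)), F (p.1 * p.2) =
      ((k ! : R) * (ν.sum : R) * ((lam.count ν.sum : R) + 1) /
        ∏ i ∈ ν.toFinset, ((ν.count i)! : R)) •
      ∑ ρ ∈ permsOfType α (ν.sum ::ₘ (lam - ν)), F ρ := by
  obtain hC | hC := (permsOfType α (ν.sum ::ₘ (lam - ν))).eq_empty_or_nonempty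
  · have hA : cycleFactorizations α k lam (ν.sum ::ₘ (lam - ν)) = ∅ := by
      rw [cycleFactorizations, hC]
      simp
    rw [hA, hC, sum_empty, sum_empty, smul_zero]
  rw [sum_mul_eq_smul_sum (R := R) conj_mem_cycleFactorizations (fun p hp ↦ (mem_filter.1 hp).2)
    fun x hx y hy ↦ isConj_of_mem_permsOfType hx hy]
  congr 1
  rw [div_eq_div_iff (Nat.cast_ne_zero.2 hC.card_pos.ne')]
  · have h := card_cycleFactorizations_mul_countFactorial hk h0 hsum hν hcard
    rw [countFactorial] at h
    exact_mod_cast h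
  · exact_mod_cast (countFactorial_pos ν).ne'

lemma mem_cycleFactorizations_iff {k : ℕ} {lam ν : Multiset ℕ} (hν : ν ≤ lam)
    (hcard : ν.card = k + 1) {p : Perm α × Perm α} :
    p ∈ cycleFactorizations α k lam (ν.sum ::ₘ (lam - ν)) ↔
      p ∈ cyclesOfLength α (k + 1) ×ˢ permsOfType α lam ∧
        Set.InjOn (cyclePartition p.2).part p.1.support ∧ metCycleType p.2 p.1.support = ν := by
  rw [cycleFactorizations, mem_filter]
  refine and_congr_right fun hp ↦ ?_
  obtain ⟨hτ, hσ⟩ := mem_product.1 hp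
  obtain rfl := mem_permsOfType.1 hσ
  rw [mem_permsOfType, parts_partition_cycle_mul_eq_iff hτ hν hcard]

open scoped Classical in
lemma sum_cyclesOfLength_product {M : Type*} [AddCommMonoid M] (k : ℕ) (lam : Multiset ℕ)
    (F : Perm α → M) :
    ∑ p ∈ cyclesOfLength α (k + 1) ×ˢ permsOfType α lam, F (p.1 * p.2) =
      ∑ ν ∈ lam.powerset.toFinset with ν.card = k + 1,
        ∑ p ∈ cycleFactorizations α k lam (ν.sum ::ₘ (lam - ν)), F (p.1 * p.2) +
      ∑ p ∈ cyclesOfLength α (k + 1) ×ˢ permsOfType α lam with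
        ¬ Set.InjOn (cyclePartition p.2).part p.1.support, F (p.1 * p.2) := by
  rw [← sum_filter_add_sum_filter_not _
    fun p : Perm α × Perm α ↦ Set.InjOn (cyclePartition p.2).part p.1.support]
  congr 1
  rw [← sum_fiberwise_of_maps_to (g := fun p : Perm α × Perm α ↦ metCycleType p.2 p.1.support)
    (t := {ν ∈ lam.powerset.toFinset | ν.card = k + 1})]
  · refine sum_congr rfl fun ν hν ↦ sum_congr ?_ fun _ _ ↦ rfl
    obtain ⟨hν, hcard⟩ := mem_filter.1 hν
    rw [Multiset.mem_toFinset, Multiset.mem_powerset] at hν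
    ext p
    rw [mem_cycleFactorizations_iff hν hcard, filter_filter, mem_filter]
  · rintro ⟨τ, σ⟩ hp
    obtain ⟨hp, hinj⟩ := mem_filter.1 hp
    obtain ⟨hτ, hσ⟩ := mem_product.1 hp
    rw [mem_filter, Multiset.mem_toFinset, Multiset.mem_powerset, ← mem_permsOfType.1 hσ,
      card_metCycleType hinj, card_support_of_mem_cyclesOfLength hτ]
    exact ⟨metCycleType_le σ _, rfl⟩

end ProductSums

section ClassSums

variable {n : ℕ} {σ τ : Perm (Fin n)}

lemma fullCycleType_eq_parts_partition : fullCycleType σ = σ.partition.parts := by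
  rw [fullCycleType, parts_partition, Fintype.card_fin]

lemma numCycles_eq_card_parts_partition : numCycles σ = σ.partition.parts.card := by
  rw [numCycles, parts_partition, Fintype.card_fin, Multiset.card_add, Multiset.card_replicate]

lemma chiClass_eq_sum_permsOfType (lam : Multiset ℕ) :
    chiClass n lam = ∑ σ ∈ permsOfType (Fin n) lam, MonoidAlgebra.single σ 1 := by
  simp only [chiClass, permsOfType, fullCycleType_eq_parts_partition]

lemma chiClass_cycle {k : ℕ} (hk1 : 1 ≤ k) (hkn : k < n) :
    chiClass n ((k + 1) ::ₘ Multiset.replicate (n - k - 1) 1) =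
      ∑ τ ∈ cyclesOfLength (Fin n) (k + 1), MonoidAlgebra.single τ 1 := by
  rw [chiClass_eq_sum_permsOfType, permsOfType_eq_filter_cycleType]
  · have hfilter : (Multiset.replicate (n - k - 1) 1).filter (2 ≤ ·) = 0 :=
      Multiset.filter_eq_nil.2 fun i hi ↦ by simp [Multiset.eq_of_mem_replicate hi]
    rw [Multiset.filter_cons_of_pos _ (by omega), hfilter, Multiset.cons_zero]
    rfl
  · simp [Multiset.mem_replicate]
  · rw [Multiset.sum_cons, Multiset.sum_replicate, smul_eq_mul, mul_one, Fintype.card_fin]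
    omega

lemma single_mul_mem_lowFilt {k : ℕ} (hτ : τ ∈ cyclesOfLength (Fin n) (k + 1))
    (hinj : ¬ Set.InjOn (cyclePartition σ).part τ.support) :
    MonoidAlgebra.single (τ * σ) 1 ∈ lowFilt n (k + (n - σ.partition.parts.card)) := by
  refine Submodule.subset_span ⟨τ * σ, ?_, rfl⟩
  have hsupport := card_support_of_mem_cyclesOfLength hτ
  have hnonempty := (isCycle_of_mem_cyclesOfLength hτ).nonempty_support
  have hlt := mt (injOn_part_of_card_parts_mul_le hnonempty) hinj
  have hle (ρ : Perm (Fin n)) : ρ.partition.parts.card ≤ n := by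
    rw [card_parts_partition]
    exact (cyclePartition ρ).card_parts_le_card.trans_eq (card_fin n)
  have := hle σ
  have := hle (τ * σ)
  rw [numCycles_eq_card_parts_partition]
  omega

open scoped Classical in
lemma chiClass_cycle_mul_chiClass {k : ℕ} (hk1 : 1 ≤ k) (hkn : k < n) {lam : Multiset ℕ}
    (h0 : 0 ∉ lam) (hsum : lam.sum = n) :
    chiClass n ((k + 1) ::ₘ Multiset.replicate (n - k - 1) 1) * chiClass n lam =
      ∑ ν ∈ lam.powerset.toFinset with ν.card = k + 1,
        (((k ! : ℂ) * (ν.sum : ℂ) * ((lam.count ν.sum : ℂ) + 1)) /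
          ∏ i ∈ ν.toFinset, ((ν.count i)! : ℂ)) •
            chiClass n (ν.sum ::ₘ (lam - ν)) +
      ∑ p ∈ cyclesOfLength (Fin n) (k + 1) ×ˢ permsOfType (Fin n) lam with
        ¬ Set.InjOn (cyclePartition p.2).part p.1.support,
          MonoidAlgebra.single (p.1 * p.2) 1 := by
  rw [chiClass_cycle hk1 hkn, chiClass_eq_sum_permsOfType lam, sum_mul_sum, ← sum_product']
  simp only [MonoidAlgebra.single_mul_single, mul_one]
  rw [sum_cyclesOfLength_product k lam fun ρ ↦ MonoidAlgebra.single ρ (1 : ℂ)]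
  congr 1
  refine sum_congr rfl fun ν hν ↦ ?_
  obtain ⟨hν, hcard⟩ := mem_filter.1 hν
  rw [Multiset.mem_toFinset, Multiset.mem_powerset] at hν
  rw [chiClass_eq_sum_permsOfType]
  exact sum_cycleFactorizations (R := ℂ) hk1 h0 (hsum.trans (Fintype.card_fin n).symm) hν hcard
    fun ρ ↦ MonoidAlgebra.single ρ (1 : ℂ)

end ClassSums

end

open scoped Classical in
/-- Cup product formula in `gr^F Z(ℂ[S_n])`:
`χ_{(k+1,1^{n-k-1})} ∪ χ_λ = Σ_ν (k! |ν| (α_{|ν|}+1) / ∏ᵢ γᵢ!) χ_{λ_ν}`,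
stated as: the product in `ℂ[S_n]` minus the right-hand side lies in the part of the
filtration of degree strictly less than `deg χ_{(k+1,…)} + deg χ_λ`. -/
theorem stmt3 (n k : ℕ) (hk1 : 1 ≤ k) (hk2 : k ≤ n - 1)
    (lam : Multiset ℕ) (h0 : (0 : ℕ) ∉ lam) (hsum : lam.sum = n) :
    chiClass n ((k + 1) ::ₘ Multiset.replicate (n - k - 1) 1) * chiClass n lam -
      ∑ ν ∈ lam.powerset.toFinset,
        (if ν.card = k + 1 then
          (((Nat.factorial k : ℂ) * (ν.sum : ℂ) * ((lam.count ν.sum : ℂ) + 1)) /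
            ∏ i ∈ ν.toFinset, (Nat.factorial (ν.count i) : ℂ)) •
            chiClass n (ν.sum ::ₘ (lam - ν))
        else 0) ∈ lowFilt n (k + (n - lam.card)) := by
  rw [← Finset.sum_filter, chiClass_cycle_mul_chiClass hk1 (by omega) h0 hsum, add_sub_cancel_left]
  refine sum_mem fun p hp ↦ ?_
  obtain ⟨hp, hinj⟩ := Finset.mem_filter.1 hp
  obtain ⟨hτ, hσ⟩ := Finset.mem_product.1 hp
  obtain rfl := mem_permsOfType.1 hσ
  exact single_mul_mem_lowFilt hτ hinj
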